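/- Let p be a prime, let f_1(x), …, f_n(x) ∈ F_p[x] have degrees m_1, …, m_n, write 𝓜_n = m_1 + ⋯ + m_n, and let t, k, a, b_1, …, b_n be nonnegative integers. Then the product f_1(x)^{b_1 t} ⋯ f_n(x)^{b_n t} divides the polynomial (f_1(x)⋯f_n(x))^k · (d^k/dx^k)(x^a f_1(x)^{b_1 t} ⋯ f_n(x)^{b_n t}), and the quotient P_{k,a,b}(x) is either identically zero or satisfies deg P_{k,a,b} ≤ a + (𝓜_n − 1)k; in particular, if a < A then deg P_{k,a,b} ≤ A + 𝓜_n k − k. -/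

import Mathlib

/-!
Put `F = ∏ f_i` and `G = ∏ f_i ^ c_i`. The logarithmic derivative of `G` is `H / F`, where
`H = ∑ c_i f_i' ∏_{j ≠ i} f_j` has degree less than `M = ∑ deg f_i`. Differentiating
`F ^ k (g G)^(k) = G P_k` and multiplying by `F` gives `P_{k+1} = F P_k' + (H - k F') P_k`,
with `P_0 = g`. Since `F` has degree at most `M`, while `H` and `F'` have degree less than `M`,
passing from `P_k` to `P_{k+1}` raises the degree by at most `M - 1`.
-/

open Polynomial

variable {R ι : Type*}

section DegreeBounds

variable [Semiring R]

theorem degree_derivative_add_one_le (g : R[X]) : (derivative g).degree + 1 ≤ g.degree := by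
  rcases eq_or_ne g 0 with rfl | hg
  · simp
  · exact Nat.WithBot.add_one_le_of_lt (degree_derivative_lt hg)

theorem degree_derivative_lt_natDegree (g : R[X]) : (derivative g).degree < g.natDegree := by
  rcases eq_or_ne g 0 with rfl | hg
  · simp
  · exact degree_eq_natDegree hg ▸ degree_derivative_lt hg

theorem degree_mul_lt_of_lt_of_le {g h : R[X]} {m n : ℕ} (hg : g.degree < m) (hh : h.degree ≤ n) :
    (g * h).degree < (m + n : ℕ) := by
  calc (g * h).degree ≤ g.degree + n := degree_mul_le_of_le le_rfl hh
    _ < m + n := WithBot.add_lt_add_right (WithBot.natCast_ne_bot n) hg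
    _ = (m + n : ℕ) := by norm_cast

theorem degree_mul_derivative_add_mul_add_one_le {F K : R[X]} {d : ℕ} (hF : F.natDegree ≤ d)
    (hK : K.degree < d) (g : R[X]) : (F * derivative g + K * g).degree + 1 ≤ d + g.degree := by
  have hderiv : (F * derivative g).degree + 1 ≤ d + g.degree := by
    calc (F * derivative g).degree + 1 ≤ d + (derivative g).degree + 1 := by
          gcongr
          exact degree_mul_le_of_le (degree_le_of_natDegree_le hF) le_rfl
      _ = d + ((derivative g).degree + 1) := add_assoc _ _ _
      _ ≤ d + g.degree := by gcongr; exact degree_derivative_add_one_le g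
  have hmul : (K * g).degree + 1 ≤ d + g.degree := by
    calc (K * g).degree + 1 ≤ K.degree + g.degree + 1 := by gcongr; exact degree_mul_le K g
      _ = K.degree + 1 + g.degree := add_right_comm _ _ _
      _ ≤ d + g.degree := by gcongr; exact Nat.WithBot.add_one_le_of_lt hK
  calc (F * derivative g + K * g).degree + 1
      ≤ max (F * derivative g).degree (K * g).degree + 1 := by gcongr; exact degree_add_le _ _
    _ = max ((F * derivative g).degree + 1) ((K * g).degree + 1) := max_add _ _ _
    _ ≤ d + g.degree := max_le hderiv hmul

end DegreeBounds

section LogarithmicDerivative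

variable [CommSemiring R] [DecidableEq ι]

theorem mul_derivative_pow (g : R[X]) (n : ℕ) :
    g * derivative (g ^ n) = g ^ n * n • derivative g := by
  cases n with
  | zero => simp
  | succ n =>
    simp only [derivative_pow_succ, map_add, map_natCast, map_one, nsmul_eq_mul, Nat.cast_succ]
    ring

/-- The numerator `∑ c_i f_i' ∏_{j ≠ i} f_j` of the logarithmic derivative of `∏ f_i ^ c_i`
over the common denominator `∏ f_i`. -/
noncomputable def logDerivNumerator (s : Finset ι) (f : ι → R[X]) (c : ι → ℕ) : R[X] :=
  ∑ i ∈ s, c i • (derivative (f i) * ∏ j ∈ s.erase i, f j)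

theorem prod_mul_derivative_prod_pow (s : Finset ι) (f : ι → R[X]) (c : ι → ℕ) :
    (∏ i ∈ s, f i) * derivative (∏ i ∈ s, f i ^ c i) =
      (∏ i ∈ s, f i ^ c i) * logDerivNumerator s f c := by
  rw [derivative_prod_finset, logDerivNumerator, Finset.mul_sum, Finset.mul_sum]
  refine Finset.sum_congr rfl fun i hi => ?_
  rw [← Finset.mul_prod_erase s f hi, ← Finset.mul_prod_erase s (fun j => f j ^ c j) hi]
  calc f i * (∏ j ∈ s.erase i, f j) * ((∏ j ∈ s.erase i, f j ^ c j) * derivative (f i ^ c i))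
      = (f i * derivative (f i ^ c i)) *
          ((∏ j ∈ s.erase i, f j) * ∏ j ∈ s.erase i, f j ^ c j) := by ring
    _ = (f i ^ c i * c i • derivative (f i)) *
          ((∏ j ∈ s.erase i, f j) * ∏ j ∈ s.erase i, f j ^ c j) := by rw [mul_derivative_pow]
    _ = (f i ^ c i * ∏ j ∈ s.erase i, f j ^ c j) *
          c i • (derivative (f i) * ∏ j ∈ s.erase i, f j) := by ring

theorem degree_logDerivNumerator_lt (s : Finset ι) (f : ι → R[X]) (c : ι → ℕ) :
    (logDerivNumerator s f c).degree < (∑ i ∈ s, (f i).natDegree : ℕ) := by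
  rw [← mem_degreeLT, logDerivNumerator]
  refine Submodule.sum_mem _ fun i hi => nsmul_mem (mem_degreeLT.mpr ?_) _
  rw [← Finset.add_sum_erase s _ hi]
  exact degree_mul_lt_of_lt_of_le (degree_derivative_lt_natDegree _)
    (degree_le_of_natDegree_le (natDegree_prod_le _ _))

end LogarithmicDerivative

section ClearedIterDerivative

variable [CommRing R]

/-- If `F * G' = G * H`, this is a quotient of `F ^ k * (g * G)^(k)` by `G`, given by a recursion
in `k` that mentions neither `G` nor division. For `F = ∏ f_i`, `G = ∏ f_i ^ (b_i t)` and
`g = X ^ a` it is the polynomial `P_{k,a,b}` of the paper. -/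
noncomputable def clearedIterDerivative (F H g : R[X]) : ℕ → R[X]
  | 0 => g
  | k + 1 => F * derivative (clearedIterDerivative F H g k) +
      (H - k • derivative F) * clearedIterDerivative F H g k

theorem mul_clearedIterDerivative {F G H : R[X]} (hG : F * derivative G = G * H) (g : R[X])
    (k : ℕ) : G * clearedIterDerivative F H g k = F ^ k * derivative^[k] (g * G) := by
  induction k with
  | zero => simp [clearedIterDerivative, mul_comm]
  | succ k ih =>
    have hderiv := congrArg derivative ih
    rw [derivative_mul, derivative_mul] at hderiv
    rw [clearedIterDerivative, Function.iterate_succ_apply']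
    linear_combination F * hderiv - clearedIterDerivative F H g k * hG +
      derivative^[k] (g * G) * mul_derivative_pow F k - k • derivative F * ih

theorem degree_clearedIterDerivative_add_le {F H : R[X]} {d : ℕ} (hF : F.natDegree ≤ d)
    (hH : H.degree < d) (g : R[X]) (k : ℕ) :
    (clearedIterDerivative F H g k).degree + k ≤ g.degree + d * k := by
  induction k with
  | zero => simp [clearedIterDerivative]
  | succ k ih =>
    have hF' : (derivative F).degree < d :=
      (degree_derivative_lt_natDegree F).trans_le (by exact_mod_cast hF)
    have hcoeff : (H - k • derivative F).degree < d :=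
      mem_degreeLT.mp (sub_mem (mem_degreeLT.mpr hH) (nsmul_mem (mem_degreeLT.mpr hF') k))
    calc (clearedIterDerivative F H g (k + 1)).degree + (k + 1 : ℕ)
        = (clearedIterDerivative F H g (k + 1)).degree + 1 + k := by push_cast; ring
      _ ≤ d + (clearedIterDerivative F H g k).degree + k := by
          gcongr ?_ + _
          exact degree_mul_derivative_add_mul_add_one_le hF hcoeff _
      _ = d + ((clearedIterDerivative F H g k).degree + k) := add_assoc _ _ _
      _ ≤ d + (g.degree + d * k) := by gcongr
      _ = g.degree + d * (k + 1 : ℕ) := by push_cast; ring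

end ClearedIterDerivative

theorem quotient_degree_bound_general [CommRing R] (s : Finset ι) (f : ι → R[X]) (c : ι → ℕ)
    (g : R[X]) (k : ℕ) :
    ∃ P : R[X],
      (∏ i ∈ s, f i ^ c i) * P =
        (∏ i ∈ s, f i) ^ k * derivative^[k] (g * ∏ i ∈ s, f i ^ c i) ∧
      (P = 0 ∨ (P.natDegree : ℤ) ≤ g.natDegree + ((∑ i ∈ s, ((f i).natDegree : ℤ)) - 1) * k) := by
  classical
  refine ⟨clearedIterDerivative (∏ i ∈ s, f i) (logDerivNumerator s f c) g k,
    mul_clearedIterDerivative (prod_mul_derivative_prod_pow s f c) g k,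
    or_iff_not_imp_left.mpr fun hP => ?_⟩
  set P := clearedIterDerivative (∏ i ∈ s, f i) (logDerivNumerator s f c) g k
  have hdegree : (P.natDegree + k : WithBot ℕ) ≤
      g.natDegree + (∑ i ∈ s, (f i).natDegree : ℕ) * k := by
    calc (P.natDegree + k : WithBot ℕ) = P.degree + k := by rw [degree_eq_natDegree hP]
      _ ≤ g.degree + (∑ i ∈ s, (f i).natDegree : ℕ) * k :=
          degree_clearedIterDerivative_add_le (natDegree_prod_le s f)
            (degree_logDerivNumerator_lt s f c) g k
      _ ≤ g.natDegree + (∑ i ∈ s, (f i).natDegree : ℕ) * k := by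
          gcongr
          exact degree_le_natDegree
  norm_cast at hdegree
  zify at hdegree
  linarith

/-- The product `f_1^{b_1 t} ⋯ f_n^{b_n t}` divides
`(f_1 ⋯ f_n)^k · (d^k/dx^k)(x^a f_1^{b_1 t} ⋯ f_n^{b_n t})`, and the quotient
`P` is either zero or satisfies `deg P ≤ a + (𝓜_n − 1) k`; in particular, if
`a < A` then `deg P ≤ A + 𝓜_n k − k`. -/
theorem quotient_degree_bound (p n : ℕ) [Fact p.Prime]
    (f : Fin n → Polynomial (ZMod p)) (m : Fin n → ℕ)
    (hdeg : ∀ i, (f i).natDegree = m i)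
    (t k a : ℕ) (b : Fin n → ℕ) :
    ∃ P : Polynomial (ZMod p),
      (∏ i, f i ^ (b i * t)) * P =
        (∏ i, f i) ^ k * (derivative^[k] ((X : Polynomial (ZMod p)) ^ a * ∏ i, f i ^ (b i * t))) ∧
      (P = 0 ∨
        (((P.natDegree : ℤ) ≤ (a : ℤ) + ((∑ i, (m i : ℤ)) - 1) * (k : ℤ)) ∧
          ∀ A : ℕ, a < A →
            (P.natDegree : ℤ) ≤ (A : ℤ) + (∑ i, (m i : ℤ)) * (k : ℤ) - (k : ℤ))) := by
  obtain ⟨P, hP, hPdeg⟩ := quotient_degree_bound_general Finset.univ f (b · * t) (X ^ a) k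
  simp only [hdeg, natDegree_X_pow] at hPdeg
  exact ⟨P, hP, hPdeg.imp_right fun h => ⟨h, fun A hA => by linarith [Nat.cast_lt (α := ℤ).mpr hA]⟩⟩
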